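/- (Generalized free-matrix-based integral inequality, Lemma 1.) Let a < b be real numbers, n, q, N natural numbers with n, q ≥ 1, and let z : [a,b] → ℝ^n be continuously differentiable; set ξ(s) = (ż(s), z(s)) ∈ ℝ^{2n}. Let R ∈ ℝ^{2n×2n} be symmetric positive definite, let ζ ∈ ℝ^q, let Y_1, …, Y_{2N+1} ∈ ℝ^{q×n} be arbitrary matrices, and let M_1, …, M_{2N+1} ∈ ℝ^{n×q} be matrices satisfying the moment conditions M_{2j−1} ζ = ∫_a^b p_{j−1}(s) ż(s) ds for j = 1, …, N+1 and M_{2j} ζ = ∫_a^b p_{j−1}(s) z(s) ds for j = 1, …, N, where p_j is the shifted Legendre polynomial of degree j on [a,b]. Define the block matrices Ȳ = [Y_1 Y_2 ⋯ Y_{2N+1} 0_{q×n}] ∈ ℝ^{q×(2N+2)n}, M̄ = [M_1ᵀ M_2ᵀ ⋯ M_{2N+1}ᵀ 0_{q×n}] ∈ ℝ^{q×(2N+2)n}, and R̄ = blockdiag(R, 3R, 5R, …, (2N+1)R) ∈ ℝ^{(2N+2)n×(2N+2)n}. Then −∫_a^b ξ(s)ᵀ R ξ(s) ds ≤ ζᵀ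 [ (b−a) Ȳ R̄^{−1} Ȳᵀ + Ȳ M̄ᵀ + M̄ Ȳᵀ ] ζ. -/

import Mathlib

open Matrix

/-- The shifted Legendre polynomial of degree `j` on the interval `[a, b]`:
`p_j(s) = (-1)^j * Σ_{i=0}^{j} (-1)^i * C(j,i) * C(j+i,i) * ((s-a)/(b-a))^i`. -/
noncomputable def shiftedLegendre (a b : ℝ) (j : ℕ) (s : ℝ) : ℝ :=
  (-1 : ℝ) ^ j *
    ∑ i ∈ Finset.range (j + 1),
      (-1 : ℝ) ^ i * (j.choose i : ℝ) * ((j + i).choose i : ℝ) * ((s - a) / (b - a)) ^ i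

/-- The block matrix `Ȳ = [Y_1 Y_2 ⋯ Y_{2N+1} 0] ∈ ℝ^{q×(2N+2)n}`, where the column space
`ℝ^{(2N+2)n}` is indexed by `Fin (N+1) × (Fin n ⊕ Fin n)`, the `j`-th `2n`-block holding
the pair `(Y_{2j+1}, Y_{2j+2})` (1-based numbering), with `Y_{2N+2} := 0`. -/
def blockY (n q N : ℕ) (Y : Fin (2 * N + 1) → Matrix (Fin q) (Fin n) ℝ) :
    Matrix (Fin q) (Fin (N + 1) × (Fin n ⊕ Fin n)) ℝ := fun p c =>
  match c.2 with
  | Sum.inl jj => Y ⟨2 * (c.1 : ℕ), by have := c.1.isLt; omega⟩ p jj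
  | Sum.inr jj =>
      if h : 2 * (c.1 : ℕ) + 1 < 2 * N + 1 then Y ⟨2 * (c.1 : ℕ) + 1, h⟩ p jj else 0

/-- The block matrix `M̄ = [M_1ᵀ M_2ᵀ ⋯ M_{2N+1}ᵀ 0] ∈ ℝ^{q×(2N+2)n}`. -/
def blockM (n q N : ℕ) (M : Fin (2 * N + 1) → Matrix (Fin n) (Fin q) ℝ) :
    Matrix (Fin q) (Fin (N + 1) × (Fin n ⊕ Fin n)) ℝ := fun p c =>
  match c.2 with
  | Sum.inl jj => M ⟨2 * (c.1 : ℕ), by have := c.1.isLt; omega⟩ jj p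
  | Sum.inr jj =>
      if h : 2 * (c.1 : ℕ) + 1 < 2 * N + 1 then M ⟨2 * (c.1 : ℕ) + 1, h⟩ jj p else 0

/-- The block-diagonal matrix `R̄ = blockdiag(R, 3R, 5R, …, (2N+1)R)`. -/
def blockR (n N : ℕ) (R : Matrix (Fin n ⊕ Fin n) (Fin n ⊕ Fin n) ℝ) :
    Matrix (Fin (N + 1) × (Fin n ⊕ Fin n)) (Fin (N + 1) × (Fin n ⊕ Fin n)) ℝ := fun p c =>
  if p.1 = c.1 then (2 * (p.1 : ℕ) + 1 : ℝ) * R p.2 c.2 else 0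

/-!
Write `y j` for the `j`-th block of the row vector `ζᵀ Ȳ` and `w = ∑ j, p j • y j`. Positive
definiteness of `R` gives `0 ≤ (ξ + R⁻¹ w)ᵀ R (ξ + R⁻¹ w)`, that is
`-ξᵀ R ξ ≤ 2 wᵀ ξ + wᵀ R⁻¹ w` at every point of `[a, b]`. In the integral of the right-hand side the
linear term only sees the moments `∫ p j • ξ`, and since `∫ p i * p j` is `(b - a) / (2 j + 1)` for
`i = j` and `0` otherwise, the quadratic term is `(b - a) ζᵀ Ȳ R̄⁻¹ Ȳᵀ ζ`.

Orthogonality of the Legendre polynomials comes from Rodrigues' formula by repeated integration by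
parts, and their norm from integrating the derivative of `x p(x)²` over `[0, 1]`.
-/

section UnitLegendre

open Polynomial (X C derivative)
open scoped Polynomial Nat

theorem integral_iterate_derivative_mul_eval {a b : ℝ} {n : ℕ} {Q : ℝ[X]}
    (hQa : (X - C a) ^ n ∣ Q) (hQb : (X - C b) ^ n ∣ Q) (P : ℝ[X]) :
    ∫ x in a..b, (derivative^[n] Q).eval x * P.eval x =
      (-1) ^ n * ∫ x in a..b, Q.eval x * (derivative^[n] P).eval x := by
  induction n generalizing P with
  | zero => simp
  | succ n ih =>
    have root {c : ℝ} (hc : (X - C c) ^ (n + 1) ∣ Q) : (derivative^[n] Q).eval c = 0 := by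
      have := Polynomial.pow_sub_dvd_iterate_derivative_of_pow_dvd n hc
      rwa [Nat.add_sub_cancel_left, pow_one, Polynomial.dvd_iff_isRoot] at this
    have parts := intervalIntegral.integral_mul_deriv_eq_deriv_mul
      (fun x _ ↦ P.hasDerivAt x) (fun x _ ↦ (derivative^[n] Q).hasDerivAt x)
      (Polynomial.continuous _ |>.intervalIntegrable a b)
      (Polynomial.continuous _ |>.intervalIntegrable a b)
    rw [root hQa, root hQb] at parts
    have weaken {c : ℝ} : (X - C c) ^ n ∣ (X - C c) ^ (n + 1) := pow_dvd_pow _ n.le_succ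
    calc ∫ x in a..b, (derivative^[n + 1] Q).eval x * P.eval x
        = -∫ x in a..b, (derivative^[n] Q).eval x * (derivative P).eval x := by
          simpa only [Function.iterate_succ_apply', mul_comm, mul_zero, zero_mul, sub_zero,
            zero_sub] using parts
      _ = (-1) ^ (n + 1) * ∫ x in a..b, Q.eval x * (derivative^[n + 1] P).eval x := by
          rw [ih (weaken.trans hQa) (weaken.trans hQb), ← Function.iterate_succ_apply]
          ring

theorem degree_X_mul_derivative_sub_natCast_mul_lt {S : Type*} [CommRing S] {P : S[X]} {n : ℕ}
    (hP : P.natDegree ≤ n) : (X * derivative P - C (n : S) * P).degree < (n : WithBot ℕ) := by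
  rw [Polynomial.degree_lt_iff_coeff_zero]
  intro k hk
  have hcoeff : (X * derivative P).coeff k = k * P.coeff k := by
    cases k with
    | zero => simp
    | succ k => simp [Polynomial.coeff_derivative, mul_comm]
  rw [Polynomial.coeff_sub, Polynomial.coeff_C_mul, hcoeff, ← sub_mul]
  rcases hk.eq_or_lt with rfl | hlt
  · rw [sub_self, zero_mul]
  · rw [Polynomial.coeff_eq_zero_of_natDegree_lt (hP.trans_lt hlt), mul_zero]

theorem integral_eval_mul_self_of_orthogonal {P : ℝ[X]} {n : ℕ} (hdeg : P.natDegree ≤ n)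
    (horth : ∀ Q : ℝ[X], Q.degree < n → ∫ x in (0 : ℝ)..1, P.eval x * Q.eval x = 0) :
    ∫ x in (0 : ℝ)..1, P.eval x * P.eval x = P.eval 1 ^ 2 / (2 * n + 1) := by
  -- Subtracting `n P` cancels the leading term of `X * derivative P`, so `P` is orthogonal to `Q`
  -- and only the multiple of `P ^ 2` survives when the derivative of `X P ^ 2` is integrated.
  set Q : ℝ[X] := X * derivative P - C (n : ℝ) * P
  have hderiv : derivative (X * P ^ 2) = C (2 * n + 1 : ℝ) * (P * P) + C 2 * (P * Q) := by
    simp only [Q, Polynomial.derivative_mul, Polynomial.derivative_X, Polynomial.derivative_pow,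
      map_add, map_mul, map_one, map_natCast, map_ofNat]
    push_cast
    ring
  have hftc : ∫ x in (0 : ℝ)..1, (derivative (X * P ^ 2)).eval x = P.eval 1 ^ 2 := by
    rw [intervalIntegral.integral_eq_sub_of_hasDerivAt (fun x _ ↦ (X * P ^ 2).hasDerivAt x)
      (Polynomial.continuous _ |>.intervalIntegrable 0 1)]
    simp
  have hsplit : ∫ x in (0 : ℝ)..1, (derivative (X * P ^ 2)).eval x =
      (2 * n + 1) * (∫ x in (0 : ℝ)..1, P.eval x * P.eval x) +
        2 * ∫ x in (0 : ℝ)..1, P.eval x * Q.eval x := by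
    rw [hderiv, ← intervalIntegral.integral_const_mul, ← intervalIntegral.integral_const_mul,
      ← intervalIntegral.integral_add]
    · simp
    · exact (by fun_prop : Continuous _).intervalIntegrable 0 1
    · exact (by fun_prop : Continuous _).intervalIntegrable 0 1
  have hQ := degree_X_mul_derivative_sub_natCast_mul_lt hdeg
  rw [hftc, horth Q hQ, mul_zero, add_zero] at hsplit
  rw [hsplit, mul_div_cancel_left₀ _ (by positivity)]

/-- The shifted Legendre polynomial of degree `n` on `[0, 1]` with real coefficients, with the sign
chosen so that its value at `1` is `1`; Mathlib's integral `Polynomial.shiftedLegendre` has the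
value `1` at `0` instead. -/
noncomputable def unitLegendre (n : ℕ) : ℝ[X] :=
  C ((-1) ^ n) * (Polynomial.shiftedLegendre n).map (Int.castRingHom ℝ)

theorem natDegree_unitLegendre_le (n : ℕ) : (unitLegendre n).natDegree ≤ n :=
  (Polynomial.natDegree_C_mul_le _ _).trans <|
    Polynomial.natDegree_map_le.trans (Polynomial.natDegree_shiftedLegendre n).le

theorem eval_unitLegendre (n : ℕ) (x : ℝ) :
    (unitLegendre n).eval x = (-1) ^ n * ∑ i ∈ Finset.range (n + 1),
      (-1) ^ i * (n.choose i : ℝ) * ((n + i).choose i : ℝ) * x ^ i := by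
  have hchoose (i : ℕ) : (n + i).choose n = (n + i).choose i := Nat.choose_symm_add
  simp [unitLegendre, Polynomial.shiftedLegendre, Polynomial.eval_finsetSum, Polynomial.map_sum,
    hchoose]

theorem eval_one_unitLegendre (n : ℕ) : (unitLegendre n).eval 1 = 1 := by
  have hsymm := Polynomial.shiftedLegendre_eval_symm n (1 : ℝ)
  have hzero : Polynomial.aeval (0 : ℝ) (Polynomial.shiftedLegendre n) = 1 := by
    simp [Polynomial.aeval_def, Polynomial.eval₂_at_zero, Polynomial.coeff_shiftedLegendre]
  rw [sub_self, hzero, mul_one] at hsymm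
  rw [unitLegendre, Polynomial.eval_mul, Polynomial.eval_C, ← algebraMap_int_eq,
    Polynomial.eval_map_algebraMap, hsymm, ← mul_pow, neg_one_mul, neg_neg, one_pow]

theorem factorial_mul_unitLegendre (n : ℕ) :
    C (n ! : ℝ) * unitLegendre n = derivative^[n] ((X - C 0) ^ n * (X - C 1) ^ n) := by
  have hrodrigues := congrArg (Polynomial.map (Int.castRingHom ℝ))
    (Polynomial.factorial_mul_shiftedLegendre_eq n)
  rw [← Polynomial.iterate_derivative_map] at hrodrigues
  simp only [Polynomial.map_mul, Polynomial.map_natCast, Polynomial.map_pow, Polynomial.map_sub,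
    Polynomial.map_one, Polynomial.map_X] at hrodrigues
  have hsign : ((X - C 0) ^ n * (X - C 1) ^ n : ℝ[X]) = C ((-1) ^ n) * (X ^ n * (1 - X) ^ n) := by
    rw [← neg_sub (C 1) X, neg_pow, map_zero, sub_zero, map_pow, map_neg, map_one]
    ring
  rw [hsign, Polynomial.iterate_derivative_C_mul, ← hrodrigues, unitLegendre, map_natCast]
  ring

theorem integral_unitLegendre_mul_eval_of_degree_lt {n : ℕ} {P : ℝ[X]} (hP : P.degree < n) :
    ∫ x in (0 : ℝ)..1, (unitLegendre n).eval x * P.eval x = 0 := by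
  have hparts := integral_iterate_derivative_mul_eval (a := 0) (b := 1)
    (dvd_mul_right ((X - C 0) ^ n) ((X - C 1) ^ n)) (dvd_mul_left _ _) P
  rw [← factorial_mul_unitLegendre, Polynomial.iterate_derivative_eq_zero_of_degree_lt hP] at hparts
  simpa [mul_assoc, Nat.factorial_ne_zero] using hparts

theorem integral_unitLegendre_mul_unitLegendre (i j : ℕ) :
    ∫ x in (0 : ℝ)..1, (unitLegendre i).eval x * (unitLegendre j).eval x =
      if i = j then 1 / (2 * (j : ℝ) + 1) else 0 := by
  have degree_lt {k l : ℕ} (hkl : k < l) : (unitLegendre k).degree < l :=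
    Polynomial.degree_le_natDegree.trans_lt <|
      Nat.cast_lt.2 ((natDegree_unitLegendre_le k).trans_lt hkl)
  split_ifs with hij
  · rw [hij, integral_eval_mul_self_of_orthogonal (natDegree_unitLegendre_le j)
      fun _ ↦ integral_unitLegendre_mul_eval_of_degree_lt, eval_one_unitLegendre, one_pow]
  · rcases Nat.lt_or_gt_of_ne hij with hlt | hgt
    · simp_rw [mul_comm ((unitLegendre i).eval _)]
      exact integral_unitLegendre_mul_eval_of_degree_lt (degree_lt hlt)
    · exact integral_unitLegendre_mul_eval_of_degree_lt (degree_lt hgt)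

end UnitLegendre

theorem shiftedLegendre_eq_eval_unitLegendre (a b : ℝ) (j : ℕ) (s : ℝ) :
    shiftedLegendre a b j s = (unitLegendre j).eval ((s - a) / (b - a)) :=
  (eval_unitLegendre j _).symm

theorem continuous_shiftedLegendre (a b : ℝ) (j : ℕ) : Continuous (shiftedLegendre a b j) := by
  unfold shiftedLegendre
  fun_prop

theorem integral_shiftedLegendre_mul_shiftedLegendre {a b : ℝ} (hab : a ≠ b) (i j : ℕ) :
    ∫ s in a..b, shiftedLegendre a b i s * shiftedLegendre a b j s =
      if i = j then (b - a) / (2 * (j : ℝ) + 1) else 0 := by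
  have hba : b - a ≠ 0 := sub_ne_zero.2 hab.symm
  simp_rw [shiftedLegendre_eq_eval_unitLegendre]
  rw [intervalIntegral.integral_comp_sub_right
      (fun x ↦ (unitLegendre i).eval (x / (b - a)) * (unitLegendre j).eval (x / (b - a))),
    intervalIntegral.integral_comp_div
      (fun x ↦ (unitLegendre i).eval x * (unitLegendre j).eval x) hba,
    sub_self, zero_div, div_self hba, integral_unitLegendre_mul_unitLegendre, smul_eq_mul,
    mul_ite, mul_one_div, mul_zero]

section QuadraticForm

open scoped Kronecker

variable {ι κ q : Type*} [Fintype ι] [Fintype κ] [Fintype q]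

theorem dotProduct_eq_sum_curry {S : Type*} [NonUnitalNonAssocSemiring S] (u v : κ × ι → S) :
    u ⬝ᵥ v = ∑ j, Function.curry u j ⬝ᵥ Function.curry v j :=
  Fintype.sum_prod_type _

theorem dotProduct_diagonal_kronecker_mulVec {S : Type*} [CommSemiring S] [DecidableEq κ]
    (d : κ → S) (R : Matrix ι ι S) (u v : κ × ι → S) :
    u ⬝ᵥ (diagonal d ⊗ₖ R) *ᵥ v =
      ∑ j, d j * (Function.curry u j ⬝ᵥ R *ᵥ Function.curry v j) := by
  have hblock (j : κ) :
      Function.curry ((diagonal d ⊗ₖ R) *ᵥ v) j = d j • R *ᵥ Function.curry v j := by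
    ext c
    simp [mulVec, dotProduct, Fintype.sum_prod_type, diagonal_apply, Finset.mul_sum, mul_assoc]
  simp_rw [dotProduct_eq_sum_curry, hblock, dotProduct_smul, smul_eq_mul]

theorem inv_diagonal_kronecker {F : Type*} [Field F] [DecidableEq κ] [DecidableEq ι] {d : κ → F}
    (hd : ∀ j, d j ≠ 0) (R : Matrix ι ι F) :
    (diagonal d ⊗ₖ R)⁻¹ = diagonal (fun j ↦ (d j)⁻¹) ⊗ₖ R⁻¹ := by
  have hdiag : (diagonal d)⁻¹ = diagonal fun j ↦ (d j)⁻¹ :=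
    inv_eq_right_inv <| by simp [diagonal_mul_diagonal, hd]
  rw [inv_kronecker, hdiag]

theorem dotProduct_sandwich_add_symm_mulVec {S : Type*} [CommSemiring S] (c : S)
    (A B : Matrix q ι S) (W : Matrix ι ι S) (ζ : q → S) :
    ζ ⬝ᵥ (c • (A * W * Aᵀ) + A * Bᵀ + B * Aᵀ) *ᵥ ζ =
      2 * ((ζ ᵥ* A) ⬝ᵥ (ζ ᵥ* B)) + c * ((ζ ᵥ* A) ⬝ᵥ W *ᵥ (ζ ᵥ* A)) := by
  simp only [add_mulVec, smul_mulVec, dotProduct_add, dotProduct_smul, smul_eq_mul,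
    ← mulVec_mulVec, mulVec_transpose, dotProduct_mulVec ζ]
  rw [dotProduct_comm (ζ ᵥ* B)]
  ring

theorem neg_dotProduct_mulVec_le [DecidableEq ι] {R : Matrix ι ι ℝ} (hR : R.PosDef)
    (w x : ι → ℝ) : -(x ⬝ᵥ R *ᵥ x) ≤ 2 * (w ⬝ᵥ x) + w ⬝ᵥ R⁻¹ *ᵥ w := by
  have hcancel : R *ᵥ (R⁻¹ *ᵥ w) = w := by
    rw [mulVec_mulVec, mul_nonsing_inv _ ((isUnit_iff_isUnit_det R).1 hR.isUnit), one_mulVec]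
  have hsymm : Rᵀ = R := by
    simpa only [conjTranspose_eq_transpose_of_trivial] using hR.isHermitian.eq
  have hcross : (R⁻¹ *ᵥ w) ⬝ᵥ R *ᵥ x = w ⬝ᵥ x := by
    rw [dotProduct_mulVec, ← mulVec_transpose, hsymm, hcancel]
  have hsq : 0 ≤ (x + R⁻¹ *ᵥ w) ⬝ᵥ R *ᵥ (x + R⁻¹ *ᵥ w) := by
    simpa only [star_trivial] using hR.posSemidef.dotProduct_mulVec_nonneg (x + R⁻¹ *ᵥ w)
  rw [mulVec_add, hcancel, add_dotProduct, dotProduct_add, dotProduct_add, hcross,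
    dotProduct_comm x w, dotProduct_comm _ w] at hsq
  linarith

end QuadraticForm

section SquareIntegrable

open MeasureTheory

variable {α ι κ : Type*} [MeasurableSpace α] {μ : Measure α} [Fintype ι] [Fintype κ]
  {E : Type*} [NormedAddCommGroup E] [NormedSpace ℝ E]

theorem integrable_dotProduct_of_memLp_two {f g : α → ι → ℝ} (hf : MemLp f 2 μ) (hg : MemLp g 2 μ) :
    Integrable (fun s ↦ f s ⬝ᵥ g s) μ :=
  integrable_finsetSum _ fun i _ ↦ (hf.eval i).integrable_mul (hg.eval i)

theorem memLp_mulVec {p : ENNReal} {f : α → ι → ℝ} (hf : MemLp f p μ) (R : Matrix κ ι ℝ) :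
    MemLp (fun s ↦ R *ᵥ f s) p μ :=
  R.mulVecLin.toContinuousLinearMap.comp_memLp' hf

theorem integral_mulVec {f : α → ι → ℝ} (hf : Integrable f μ) (R : Matrix κ ι ℝ) :
    ∫ s, R *ᵥ f s ∂μ = R *ᵥ ∫ s, f s ∂μ :=
  R.mulVecLin.toContinuousLinearMap.integral_comp_comm hf

theorem integrable_smul_of_memLp_two {p : α → ℝ} {f : α → E} (hp : MemLp p 2 μ)
    (hf : MemLp f 2 μ) : Integrable (fun s ↦ p s • f s) μ :=
  memLp_one_iff_integrable.1 (hf.smul hp)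

theorem integral_smul_sumElim {p : α → ℝ} {u : α → ι → ℝ} {v : α → κ → ℝ} (hp : MemLp p 2 μ)
    (hu : MemLp u 2 μ) (hv : MemLp v 2 μ) :
    ∫ s, p s • Sum.elim (u s) (v s) ∂μ = Sum.elim (∫ s, p s • u s ∂μ) (∫ s, p s • v s ∂μ) := by
  have hpu := integrable_smul_of_memLp_two hp hu
  have hpv := integrable_smul_of_memLp_two hp hv
  have hcomp : ∀ c, Integrable (fun s ↦ (p s • Sum.elim (u s) (v s)) c) μ
    | Sum.inl c => hpu.eval c
    | Sum.inr c => hpv.eval c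
  ext (c | c)
  · rw [eval_integral hcomp, Sum.elim_inl, eval_integral hpu.eval]
    rfl
  · rw [eval_integral hcomp, Sum.elim_inr, eval_integral hpv.eval]
    rfl

theorem memLp_sum_smul_const {p : ENNReal} {φ : κ → α → ℝ} (hφ : ∀ j, MemLp (φ j) p μ)
    (y : κ → E) : MemLp (fun s ↦ ∑ j, φ j s • y j) p μ :=
  memLp_finsetSum _ fun j _ ↦ (ContinuousLinearMap.toSpanSingleton ℝ (y j)).comp_memLp' (hφ j)

theorem integral_sum_smul_dotProduct {φ : κ → α → ℝ} (hφ : ∀ j, MemLp (φ j) 2 μ)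
    {ξ : α → ι → ℝ} (hξ : MemLp ξ 2 μ) (y : κ → ι → ℝ) :
    ∫ s, (∑ j, φ j s • y j) ⬝ᵥ ξ s ∂μ = ∑ j, y j ⬝ᵥ ∫ s, φ j s • ξ s ∂μ := by
  have hmoment (j : κ) : Integrable (fun s ↦ φ j s • ξ s) μ :=
    integrable_smul_of_memLp_two (hφ j) hξ
  let dot (j : κ) : (ι → ℝ) →L[ℝ] ℝ := (dotProductBilin ℝ ℝ (y j)).toContinuousLinearMap
  calc ∫ s, (∑ j, φ j s • y j) ⬝ᵥ ξ s ∂μ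
      = ∫ s, ∑ j, dot j (φ j s • ξ s) ∂μ := by simp [dot, sum_dotProduct]
    _ = ∑ j, ∫ s, dot j (φ j s • ξ s) ∂μ :=
        integral_finsetSum _ fun j _ ↦ (dot j).integrable_comp (hmoment j)
    _ = ∑ j, y j ⬝ᵥ ∫ s, φ j s • ξ s ∂μ :=
        Finset.sum_congr rfl fun j _ ↦ (dot j).integral_comp_comm (hmoment j)

theorem integral_smul_sum_smul_of_orthogonal [CompleteSpace E] [DecidableEq κ]
    {φ : κ → α → ℝ} {d : κ → ℝ} (hφ : ∀ j, MemLp (φ j) 2 μ)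
    (horth : ∀ i j, ∫ s, φ i s * φ j s ∂μ = if i = j then d j else 0) (y : κ → E) (j : κ) :
    ∫ s, φ j s • ∑ i, φ i s • y i ∂μ = d j • y j := by
  simp_rw [Finset.smul_sum, smul_smul]
  rw [integral_finsetSum]
  · simp [integral_smul_const, horth]
  · exact fun i _ ↦ ((hφ j).integrable_mul (hφ i)).smul_const (y i)

theorem integral_sum_smul_dotProduct_mulVec_self_of_orthogonal [DecidableEq κ] {φ : κ → α → ℝ}
    {d : κ → ℝ} (hφ : ∀ j, MemLp (φ j) 2 μ)
    (horth : ∀ i j, ∫ s, φ i s * φ j s ∂μ = if i = j then d j else 0)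
    (S : Matrix ι ι ℝ) (y : κ → ι → ℝ) :
    ∫ s, (∑ i, φ i s • y i) ⬝ᵥ S *ᵥ (∑ j, φ j s • y j) ∂μ = ∑ j, d j * (y j ⬝ᵥ S *ᵥ y j) := by
  have hw := memLp_sum_smul_const hφ y
  rw [integral_sum_smul_dotProduct hφ (memLp_mulVec hw S)]
  refine Finset.sum_congr rfl fun j _ ↦ ?_
  simp_rw [← mulVec_smul]
  rw [integral_mulVec (integrable_smul_of_memLp_two (hφ j) hw),
    integral_smul_sum_smul_of_orthogonal hφ horth, mulVec_smul, dotProduct_smul, smul_eq_mul]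

theorem neg_integral_dotProduct_mulVec_le_of_orthogonal [DecidableEq κ] [DecidableEq ι]
    {φ : κ → α → ℝ} {d : κ → ℝ} (hφ : ∀ j, MemLp (φ j) 2 μ)
    (horth : ∀ i j, ∫ s, φ i s * φ j s ∂μ = if i = j then d j else 0)
    {ξ : α → ι → ℝ} (hξ : MemLp ξ 2 μ) {R : Matrix ι ι ℝ} (hR : R.PosDef) (y : κ → ι → ℝ) :
    -∫ s, ξ s ⬝ᵥ R *ᵥ ξ s ∂μ ≤
      2 * ∑ j, y j ⬝ᵥ (∫ s, φ j s • ξ s ∂μ) + ∑ j, d j * (y j ⬝ᵥ R⁻¹ *ᵥ y j) := by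
  set w : α → ι → ℝ := fun s ↦ ∑ j, φ j s • y j
  have hw : MemLp w 2 μ := memLp_sum_smul_const hφ y
  have hlinear := (integrable_dotProduct_of_memLp_two hw hξ).const_mul 2
  have hquadratic := integrable_dotProduct_of_memLp_two hw (memLp_mulVec hw R⁻¹)
  calc -∫ s, ξ s ⬝ᵥ R *ᵥ ξ s ∂μ
      = ∫ s, -(ξ s ⬝ᵥ R *ᵥ ξ s) ∂μ := (integral_neg _).symm
    _ ≤ ∫ s, (2 * (w s ⬝ᵥ ξ s) + w s ⬝ᵥ R⁻¹ *ᵥ w s) ∂μ :=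
        integral_mono (integrable_dotProduct_of_memLp_two hξ (memLp_mulVec hξ R)).neg
          (hlinear.add hquadratic) fun s ↦ neg_dotProduct_mulVec_le hR (w s) (ξ s)
    _ = _ := by
        rw [integral_add hlinear hquadratic, integral_const_mul,
          integral_sum_smul_dotProduct hφ hξ,
          integral_sum_smul_dotProduct_mulVec_self_of_orthogonal hφ horth]

theorem memLp_restrict_of_continuousOn_isCompact {X E : Type*} [TopologicalSpace X]
    [MeasurableSpace X] [OpensMeasurableSpace X] [TopologicalSpace.PseudoMetrizableSpace X]
    [NormedAddCommGroup E] {μ : Measure X} [IsFiniteMeasureOnCompacts μ] {K : Set X} {f : X → E}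
    (hK : IsCompact K) (hKm : MeasurableSet K) (hf : ContinuousOn f K) (p : ENNReal) :
    MemLp f p (μ.restrict K) := by
  obtain ⟨C, hC⟩ := hK.exists_bound_of_continuousOn hf
  have : IsFiniteMeasure (μ.restrict K) := isFiniteMeasure_restrict.2 hK.measure_lt_top.ne
  exact .of_bound (hf.aestronglyMeasurable_of_isCompact hK hKm) C (ae_restrict_of_forall_mem hKm hC)

theorem memLp_restrict_Ioc_of_continuousOn {E : Type*} [NormedAddCommGroup E] {a b : ℝ}
    {f : ℝ → E} (hf : ContinuousOn f (Set.Icc a b)) (p : ENNReal) :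
    MemLp f p (volume.restrict (Set.Ioc a b)) :=
  (memLp_restrict_of_continuousOn_isCompact isCompact_Icc measurableSet_Icc hf p).mono_measure
    (Measure.restrict_mono Set.Ioc_subset_Icc_self le_rfl)

end SquareIntegrable

section Blocks

open scoped Kronecker

variable {n q N : ℕ}

theorem blockR_eq_diagonal_kronecker (R : Matrix (Fin n ⊕ Fin n) (Fin n ⊕ Fin n) ℝ) :
    blockR n N R = diagonal (fun j : Fin (N + 1) ↦ 2 * ((j : ℕ) : ℝ) + 1) ⊗ₖ R := by
  ext ⟨i, p⟩ ⟨j, c⟩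
  simp [blockR, diagonal_apply]

theorem mul_dotProduct_inv_blockR_mulVec (ℓ : ℝ) (R : Matrix (Fin n ⊕ Fin n) (Fin n ⊕ Fin n) ℝ)
    (v : Fin (N + 1) × (Fin n ⊕ Fin n) → ℝ) :
    ℓ * (v ⬝ᵥ (blockR n N R)⁻¹ *ᵥ v) = ∑ j : Fin (N + 1),
      ℓ / (2 * ((j : ℕ) : ℝ) + 1) * (Function.curry v j ⬝ᵥ R⁻¹ *ᵥ Function.curry v j) := by
  rw [blockR_eq_diagonal_kronecker, inv_diagonal_kronecker (fun j ↦ by positivity),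
    dotProduct_diagonal_kronecker_mulVec, Finset.mul_sum]
  simp_rw [← mul_assoc, div_eq_mul_inv]

theorem vecMul_blockY_inr_of_le (Y : Fin (2 * N + 1) → Matrix (Fin q) (Fin n) ℝ) (ζ : Fin q → ℝ)
    {j : Fin (N + 1)} (hj : N ≤ (j : ℕ)) (c : Fin n) :
    (ζ ᵥ* blockY n q N Y) (j, Sum.inr c) = 0 := by
  simp [vecMul, dotProduct, blockY, hj.not_gt]

theorem vecMul_blockM_inl (M : Fin (2 * N + 1) → Matrix (Fin n) (Fin q) ℝ) (ζ : Fin q → ℝ)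
    (j : Fin (N + 1)) (c : Fin n) :
    (ζ ᵥ* blockM n q N M) (j, Sum.inl c) = (M ⟨2 * (j : ℕ), by omega⟩ *ᵥ ζ) c := by
  simp [vecMul, mulVec, dotProduct, blockM, mul_comm]

theorem vecMul_blockM_inr_of_lt (M : Fin (2 * N + 1) → Matrix (Fin n) (Fin q) ℝ) (ζ : Fin q → ℝ)
    {j : Fin (N + 1)} (hj : (j : ℕ) < N) (c : Fin n) :
    (ζ ᵥ* blockM n q N M) (j, Sum.inr c) = (M ⟨2 * (j : ℕ) + 1, by omega⟩ *ᵥ ζ) c := by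
  simp [vecMul, mulVec, dotProduct, blockM, mul_comm, hj]

theorem vecMul_blockY_dotProduct_vecMul_blockM (Y : Fin (2 * N + 1) → Matrix (Fin q) (Fin n) ℝ)
    {M : Fin (2 * N + 1) → Matrix (Fin n) (Fin q) ℝ} {ζ : Fin q → ℝ}
    {u v : ℕ → Fin n → ℝ}
    (hu : ∀ j : Fin (N + 1), M ⟨2 * (j : ℕ), by omega⟩ *ᵥ ζ = u j)
    (hv : ∀ j : Fin N, M ⟨2 * (j : ℕ) + 1, by omega⟩ *ᵥ ζ = v j) :
    (ζ ᵥ* blockY n q N Y) ⬝ᵥ (ζ ᵥ* blockM n q N M) =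
      ∑ j, Function.curry (ζ ᵥ* blockY n q N Y) j ⬝ᵥ Sum.elim (u j) (v j) := by
  rw [dotProduct_eq_sum_curry]
  refine Finset.sum_congr rfl fun j _ ↦ Finset.sum_congr rfl fun c _ ↦ ?_
  rcases c with c | c
  · simp only [Function.curry_apply, vecMul_blockM_inl, hu, Sum.elim_inl]
  · rcases lt_or_ge (j : ℕ) N with hj | hj
    · simp only [Function.curry_apply, vecMul_blockM_inr_of_lt M ζ hj, hv ⟨j, hj⟩, Sum.elim_inr]
    · -- Here the padding of `M̄` is `0` rather than `v N`, but the padding of `Ȳ` hides this.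
      simp only [Function.curry_apply, vecMul_blockY_inr_of_le Y ζ hj, zero_mul]

end Blocks

open MeasureTheory in
theorem generalized_integral_inequality_general {n q N : ℕ} {a b : ℝ} (hab : a < b)
    {z z' : ℝ → Fin n → ℝ}
    (hz : ∀ s ∈ Set.Icc a b, HasDerivWithinAt z (z' s) (Set.Icc a b) s)
    (hz' : MemLp z' 2 (volume.restrict (Set.Ioc a b)))
    {R : Matrix (Fin n ⊕ Fin n) (Fin n ⊕ Fin n) ℝ} (hR : R.PosDef) {ζ : Fin q → ℝ}
    (Y : Fin (2 * N + 1) → Matrix (Fin q) (Fin n) ℝ)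
    {M : Fin (2 * N + 1) → Matrix (Fin n) (Fin q) ℝ}
    (hModd : ∀ j : Fin (N + 1), M ⟨2 * (j : ℕ), by omega⟩ *ᵥ ζ =
      ∫ s in a..b, shiftedLegendre a b j s • z' s)
    (hMeven : ∀ j : Fin N, M ⟨2 * (j : ℕ) + 1, by omega⟩ *ᵥ ζ =
      ∫ s in a..b, shiftedLegendre a b j s • z s) :
    -∫ s in a..b, Sum.elim (z' s) (z s) ⬝ᵥ R *ᵥ Sum.elim (z' s) (z s) ≤
      ζ ⬝ᵥ ((b - a) • (blockY n q N Y * (blockR n N R)⁻¹ * (blockY n q N Y)ᵀ) +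
        blockY n q N Y * (blockM n q N M)ᵀ + blockM n q N M * (blockY n q N Y)ᵀ) *ᵥ ζ := by
  have hz₂ : MemLp z 2 (volume.restrict (Set.Ioc a b)) :=
    memLp_restrict_Ioc_of_continuousOn (fun s hs ↦ (hz s hs).continuousWithinAt) 2
  have hp (j : ℕ) : MemLp (shiftedLegendre a b j) 2 (volume.restrict (Set.Ioc a b)) :=
    memLp_restrict_Ioc_of_continuousOn (continuous_shiftedLegendre a b j).continuousOn 2
  have hξ : MemLp (fun s ↦ Sum.elim (z' s) (z s)) 2 (volume.restrict (Set.Ioc a b)) :=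
    .of_eval (Sum.rec hz'.eval hz₂.eval)
  have horth (i j : Fin (N + 1)) :
      ∫ s in Set.Ioc a b, shiftedLegendre a b i s * shiftedLegendre a b j s =
        if i = j then (b - a) / (2 * ((j : ℕ) : ℝ) + 1) else 0 := by
    rw [← intervalIntegral.integral_of_le hab.le,
      integral_shiftedLegendre_mul_shiftedLegendre hab.ne]
    simp only [Fin.val_inj]
  rw [dotProduct_sandwich_add_symm_mulVec, mul_dotProduct_inv_blockR_mulVec,
    vecMul_blockY_dotProduct_vecMul_blockM Y
      (u := fun j ↦ ∫ s in a..b, shiftedLegendre a b j s • z' s)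
      (v := fun j ↦ ∫ s in a..b, shiftedLegendre a b j s • z s) hModd hMeven]
  simp only [intervalIntegral.integral_of_le hab.le]
  simp only [← integral_smul_sumElim (hp _) hz' hz₂]
  exact neg_integral_dotProduct_mulVec_le_of_orthogonal (fun j : Fin (N + 1) ↦ hp j) horth hξ hR _

/-- Generalized free-matrix-based integral inequality (Lemma 1): with
`ξ(s) = (ż(s), z(s))`, `R ≻ 0`, free matrices `Y_i` and moment matrices `M_i` satisfying
`M_{2j−1} ζ = ∫_a^b p_{j−1} ż` and `M_{2j} ζ = ∫_a^b p_{j−1} z`, one has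
`−∫_a^b ξᵀ R ξ ≤ ζᵀ[(b−a) Ȳ R̄⁻¹ Ȳᵀ + Ȳ M̄ᵀ + M̄ Ȳᵀ]ζ`. -/
theorem generalized_integral_inequality (n q N : ℕ) (hn : 1 ≤ n) (hq : 1 ≤ q)
    (a b : ℝ) (hab : a < b)
    (z z' : ℝ → Fin n → ℝ)
    (hz : ∀ s ∈ Set.Icc a b, HasDerivAt z (z' s) s)
    (hz' : ContinuousOn z' (Set.Icc a b))
    (R : Matrix (Fin n ⊕ Fin n) (Fin n ⊕ Fin n) ℝ) (hR : R.PosDef)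
    (ζ : Fin q → ℝ)
    (Y : Fin (2 * N + 1) → Matrix (Fin q) (Fin n) ℝ)
    (M : Fin (2 * N + 1) → Matrix (Fin n) (Fin q) ℝ)
    (hModd : ∀ j : Fin (N + 1),
      (M ⟨2 * (j : ℕ), by have := j.isLt; omega⟩).mulVec ζ
        = ∫ s in a..b, shiftedLegendre a b (j : ℕ) s • z' s)
    (hMeven : ∀ j : Fin N,
      (M ⟨2 * (j : ℕ) + 1, by have := j.isLt; omega⟩).mulVec ζ
        = ∫ s in a..b, shiftedLegendre a b (j : ℕ) s • z s) :
    -∫ s in a..b, (Sum.elim (z' s) (z s)) ⬝ᵥ (R.mulVec (Sum.elim (z' s) (z s)))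
      ≤ ζ ⬝ᵥ (((b - a) • (blockY n q N Y * (blockR n N R)⁻¹ * (blockY n q N Y)ᵀ)
          + blockY n q N Y * (blockM n q N M)ᵀ
          + blockM n q N M * (blockY n q N Y)ᵀ).mulVec ζ) := by
  exact generalized_integral_inequality_general hab (fun s hs ↦ (hz s hs).hasDerivWithinAt)
    (memLp_restrict_Ioc_of_continuousOn hz' 2) hR Y hModd hMeven
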